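/- Let q be a real number with 0 < q and q ≠ 1, let h₁, h₂, l₁, l₂, α₁, α₂ be real numbers, t₁, t₂ nonzero reals, and set λ = (h₁+h₂-l₁-l₂-α₁-α₂+1)/2. Let (i,i') = (1,2) or (i,i') = (2,1). Assume λ + α₁ = -N for some positive integer N (so (q^{λ+α₁};q)_n = 0 for all n > N and the series below is a finite sum), and assume q^{h_{i'}-l_i+n}·t_{i'}/t_i ≠ 1 for all integers 1 ≤ n ≤ N and q^{h_i-l_i+k} ≠ 1 for all integers 1 ≤ k ≤ N. Define c_n = Σ_{k=0}^{n} q^{-nk+k²/2} · (q^{λ+α₁-h_{i'}+l_{i'}};q)_k / ((q^{h_i-l_i+1};q)_k (q;q)_{n-k} (q;q)_k) · (-q^{-λ-α₁+h_i+1/2}·t_i/(q^{l_{i'}}·t_{i'}))^k. Then the function g(x) = x^{-α₁} · Σ_{n=0}^{N} c_n · (q^{λ+α₁};q)_n/(q^{1+h_{i'}-l_i}·t_{i'}/t_i;q)_n · (x/(q^{l_i-1/2}t_i);q)_n · (q^{-λ-α₁+h_{i'}+1/2}·t_{i'}/x)^n satisfies the variant of the q-hypergeometric equation of degree two for all x >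 0. (The exponent -α₁ of the prefactor is used here, consistent with the exponents at infinity and with the paper's stated confluent limits of this solution.) -/

import Mathlib

/-- The finite q-shifted factorial `(a;q)_n = ∏_{i=0}^{n-1} (1 - a q^i)`. -/
noncomputable def qPoch (q a : ℝ) (n : ℕ) : ℝ :=
  ∏ i ∈ Finset.range n, (1 - a * q ^ i)

/-- The variant of the q-hypergeometric equation of degree two (for `x > 0`). -/
def qHyperVar2 (q h₁ h₂ l₁ l₂ α₁ α₂ t₁ t₂ : ℝ) (g : ℝ → ℝ) : Prop :=
  ∀ x : ℝ, 0 < x →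
    (x - q ^ (h₁ + 1/2) * t₁) * (x - q ^ (h₂ + 1/2) * t₂) * g (x / q)
    + q ^ (α₁ + α₂) * (x - q ^ (l₁ - 1/2) * t₁) * (x - q ^ (l₂ - 1/2) * t₂) * g (q * x)
    - ((q ^ α₁ + q ^ α₂) * x ^ 2
        + (-(q ^ ((h₁ + h₂ + l₁ + l₂ + α₁ + α₂) / 2))
            * ((q ^ (-h₂) + q ^ (-l₂)) * t₁ + (q ^ (-h₁) + q ^ (-l₁)) * t₂)) * x
        + q ^ ((h₁ + h₂ + l₁ + l₂ + α₁ + α₂) / 2) * (q ^ (1/2 : ℝ) + q ^ (-1/2 : ℝ)) * t₁ * t₂)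
      * g x = 0

/-!
In the variable `y = x / (q ^ (lᵢ - 1/2) * tᵢ)`, and after removing the factor `x ^ (-α₁)`, the
equation becomes `normalizedOp f = 0` for a second-order `q`-difference operator. This operator is
tridiagonal on the functions `(y;q)_n / y ^ n`, so that `∑ C_n (y;q)_n / y ^ n` is annihilated as
soon as the coefficients `C_n` satisfy the transposed three-term recurrence. Up to an explicit
factor, `C_n` is a terminating series `₂φ₁(q⁻ⁿ, D; qA; q, qw)`, and the recurrence is Heine's
contiguous relation for it in the parameter `q⁻ⁿ`; that relation is a telescoping sum. The
boundary terms at `n = N` vanish because `q ^ (λ + α₁) * q ^ N = 1`.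
-/

section qPoch

variable {q a : ℝ} {n : ℕ}

lemma qPoch_zero (q a : ℝ) : qPoch q a 0 = 1 := Finset.prod_range_zero _

lemma qPoch_succ (q a : ℝ) (n : ℕ) : qPoch q a (n + 1) = qPoch q a n * (1 - a * q ^ n) :=
  Finset.prod_range_succ _ _

lemma qPoch_succ' (q a : ℝ) (n : ℕ) : qPoch q a (n + 1) = (1 - a) * qPoch q (q * a) n := by
  simp only [qPoch, Finset.prod_range_succ', pow_zero, mul_one, mul_comm _ (1 - a)]
  exact congrArg _ (Finset.prod_congr rfl fun i _ => by ring)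

lemma qPoch_ne_zero_iff : qPoch q a n ≠ 0 ↔ ∀ k < n, 1 - a * q ^ k ≠ 0 := by
  simp only [qPoch, Finset.prod_ne_zero_iff, Finset.mem_range]

lemma qPoch_ne_zero_of_le {m : ℕ} (h : qPoch q a n ≠ 0) (hmn : m ≤ n) : qPoch q a m ≠ 0 :=
  qPoch_ne_zero_iff.2 fun k hk => qPoch_ne_zero_iff.1 h k (hk.trans_le hmn)

lemma qPoch_self_ne_zero (hq : 0 < q) (hq1 : q ≠ 1) (n : ℕ) : qPoch q q n ≠ 0 :=
  qPoch_ne_zero_iff.2 fun k _ h =>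
    hq1 ((pow_eq_one_iff_of_nonneg hq.le k.succ_ne_zero).1 (by rw [pow_succ']; linarith))

lemma qPoch_mul_ne_zero (h : ∀ k : ℕ, 1 ≤ k → k ≤ n → a * q ^ k ≠ 1) : qPoch q (q * a) n ≠ 0 :=
  qPoch_ne_zero_iff.2 fun k hk hk₀ => h (k + 1) k.succ_pos hk (by rw [pow_succ]; linarith)

end qPoch

section HeineSum

/-- The `k`-th term of `heineSum q A D w n`. The powers of `q` are collected so that no negative
exponents occur; for `k > n` the truncated `n - k` makes it a junk value. -/
noncomputable def heineTerm (q A D w : ℝ) (n k : ℕ) : ℝ :=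
  q ^ (k + 1).choose 2 * (-w / q ^ n) ^ k * qPoch q D k /
    (qPoch q (q * A) k * qPoch q q (n - k) * qPoch q q k)

/-- The terminating Heine series `₂φ₁(q⁻ⁿ, D; qA; q, qw) / (q;q)_n`. The coefficients `c_n` of the
solution are of this form. -/
noncomputable def heineSum (q A D w : ℝ) (n : ℕ) : ℝ :=
  ∑ k ∈ Finset.range (n + 1), heineTerm q A D w n k

variable {q A : ℝ} (D w : ℝ) {n k : ℕ}

lemma heineTerm_eq_sub_mul_heineTerm_succ (hq : q ≠ 0) (hqq : qPoch q q (n + 1) ≠ 0)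
    (hk : k ≤ n) :
    heineTerm q A D w n k = (q ^ k - q ^ (n + 1)) * heineTerm q A D w (n + 1) k := by
  obtain ⟨m, rfl⟩ := Nat.exists_eq_add_of_le hk
  have hm : 1 - q * q ^ m ≠ 0 := qPoch_ne_zero_iff.1 hqq m (by lia)
  simp only [heineTerm, show k + m - k = m by lia, show k + m + 1 - k = m + 1 by lia, qPoch_succ,
    show q ^ k - q ^ (k + m + 1) = q ^ k * (1 - q * q ^ m) by ring,
    show -w / q ^ (k + m + 1) = -w / q ^ (k + m) / q by rw [pow_succ, div_div], div_pow _ q]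
  generalize 1 - q * q ^ m = u at *
  field_simp

lemma heineTerm_succ_succ (hq : q ≠ 0) (hqq : qPoch q q (n + 1) ≠ 0)
    (hA : qPoch q (q * A) (n + 1) ≠ 0) (hk : k ≤ n) :
    (1 - A * q ^ (k + 1)) * (1 - q ^ (k + 1)) * heineTerm q A D w (n + 1) (k + 1) =
      -(w / q ^ n * (1 - D * q ^ k) * (q ^ k - q ^ (n + 1)) * heineTerm q A D w (n + 1) k) := by
  obtain ⟨m, rfl⟩ := Nat.exists_eq_add_of_le hk
  have hm : 1 - q * q ^ m ≠ 0 := qPoch_ne_zero_iff.1 hqq m (by lia)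
  have hqk : 1 - q * q ^ k ≠ 0 := qPoch_ne_zero_iff.1 hqq k (by lia)
  have hAk : 1 - q * A * q ^ k ≠ 0 := qPoch_ne_zero_iff.1 hA k (by lia)
  have hchoose : (k + 1 + 1).choose 2 = (k + 1).choose 2 + (k + 1) := by
    rw [Nat.choose_succ_succ' (k + 1) 1, Nat.choose_one_right, add_comm]
  simp only [heineTerm, show k + m + 1 - (k + 1) = m by lia, show k + m + 1 - k = m + 1 by lia,
    qPoch_succ, hchoose, pow_add q ((k + 1).choose 2), pow_succ (-w / q ^ (k + m + 1)) k,
    show q ^ k - q ^ (k + m + 1) = q ^ k * (1 - q * q ^ m) by ring,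
    show 1 - A * q ^ (k + 1) = 1 - q * A * q ^ k by ring,
    show 1 - q ^ (k + 1) = 1 - q * q ^ k by ring]
  generalize (-w / q ^ (k + m + 1)) ^ k = W
  generalize 1 - q * q ^ m = u at *
  generalize 1 - q * q ^ k = u' at *
  generalize 1 - q * A * q ^ k = v at *
  field_simp
  ring

lemma heineSum_eq_sum_succ (hq : q ≠ 0) (hqq : qPoch q q (n + 1) ≠ 0) :
    heineSum q A D w n =
      ∑ k ∈ Finset.range (n + 2), (q ^ k - q ^ (n + 1)) * heineTerm q A D w (n + 1) k := by
  rw [Finset.sum_range_succ, sub_self, zero_mul, add_zero, heineSum]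
  exact Finset.sum_congr rfl fun k hk =>
    heineTerm_eq_sub_mul_heineTerm_succ D w hq hqq (Finset.mem_range_succ_iff.1 hk)

lemma heineSum_eq_sum_succ_succ (hq : q ≠ 0) (hqq : qPoch q q (n + 2) ≠ 0) :
    heineSum q A D w n = ∑ k ∈ Finset.range (n + 3),
      (q ^ k - q ^ (n + 1)) * (q ^ k - q ^ (n + 2)) * heineTerm q A D w (n + 2) k := by
  have hqq' : qPoch q q (n + 1) ≠ 0 := qPoch_ne_zero_of_le hqq (by lia)
  rw [Finset.sum_range_succ, sub_self, mul_zero, zero_mul, add_zero,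
    heineSum_eq_sum_succ D w hq hqq']
  refine Finset.sum_congr rfl fun k hk => ?_
  rw [heineTerm_eq_sub_mul_heineTerm_succ D w hq hqq (Finset.mem_range_succ_iff.1 hk), mul_assoc]

lemma sum_mul_heineTerm_eq_zero (hq : q ≠ 0) (hqq : qPoch q q (n + 1) ≠ 0)
    (hA : qPoch q (q * A) (n + 1) ≠ 0) :
    ∑ k ∈ Finset.range (n + 2),
      ((1 - A * q ^ k) * (1 - q ^ k) * heineTerm q A D w (n + 1) k +
        w / q ^ n * (1 - D * q ^ k) * (q ^ k - q ^ (n + 1)) * heineTerm q A D w (n + 1) k) = 0 := by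
  -- By `heineTerm_succ_succ` the second summand at `k` cancels the first one at `k + 1`.
  rw [Finset.sum_add_distrib, Finset.sum_range_succ', Finset.sum_range_succ _ (n + 1),
    Finset.sum_congr rfl fun k hk =>
      heineTerm_succ_succ D w hq hqq hA (Finset.mem_range_succ_iff.1 hk),
    Finset.sum_neg_distrib]
  ring

/-- The coefficients arise by expanding the quadratic polynomial in `s = q ^ k` of
`sum_mul_heineTerm_eq_zero` in the Newton basis `1`, `s - q ^ (n + 2)`,
`(s - q ^ (n + 1)) * (s - q ^ (n + 2))`. -/
lemma heineSum_three_term (hq : q ≠ 0) (hqq : qPoch q q (n + 2) ≠ 0)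
    (hA : qPoch q (q * A) (n + 2) ≠ 0) :
    (A - w * D / q ^ (n + 1)) * heineSum q A D w n
      - (w * D + 1 + A * (1 - (q + 1) * q ^ (n + 1)) - w / q ^ (n + 1)) * heineSum q A D w (n + 1)
      + (1 - A * q ^ (n + 2)) * (1 - q ^ (n + 2)) * heineSum q A D w (n + 2) = 0 := by
  rw [heineSum_eq_sum_succ_succ D w hq hqq, heineSum_eq_sum_succ D w hq hqq, heineSum,
    Finset.mul_sum, Finset.mul_sum, Finset.mul_sum, ← Finset.sum_sub_distrib,
    ← Finset.sum_add_distrib, ← sum_mul_heineTerm_eq_zero D w hq hqq hA]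
  refine Finset.sum_congr rfl fun k _ => ?_
  rw [pow_succ q (n + 1)]
  field_simp
  ring

lemma heineSum_three_term_zero (hq : q ≠ 0) (hqq : qPoch q q 1 ≠ 0)
    (hA : qPoch q (q * A) 1 ≠ 0) :
    -(w * D + 1 + A * (1 - (q + 1)) - w) * heineSum q A D w 0
      + (1 - A * q) * (1 - q) * heineSum q A D w 1 = 0 := by
  have h := sum_mul_heineTerm_eq_zero (n := 0) D w hq hqq hA
  rw [heineSum_eq_sum_succ D w hq hqq, heineSum]
  simp only [Finset.sum_range_succ, Finset.sum_range_zero, zero_add, pow_zero, pow_one] at h ⊢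
  linear_combination h

end HeineSum

section NormalizedOp

/-- The operator of the degree-two variant of the `q`-hypergeometric equation, normalized: with
`A = q ^ (hᵢ - lᵢ)`, `B = q ^ (hᵢ' - lᵢ) * tᵢ' / tᵢ`, `C = q ^ (lᵢ' - lᵢ) * tᵢ' / tᵢ`,
`Q = q ^ (λ + α₁)`, the function `x ^ (-α₁) * f (x / (q ^ (lᵢ - 1 / 2) * tᵢ))` solves the equation
exactly when this operator annihilates `f`. -/
noncomputable def normalizedOp (q A B C Q : ℝ) (f : ℝ → ℝ) (y : ℝ) : ℝ :=
  (y - q * A) * (y - q * B) * f (y / q)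
    + q * A * B / (C * Q ^ 2) * (y - 1) * (y - C) * f (q * y)
    - ((1 + q * A * B / (C * Q ^ 2)) * y ^ 2 - q / Q * (A + B + A * B + A * B / C) * y
      + A * B * q * (1 + q) / Q) * f y

/-- The functions `(y;q)_n / y ^ n` on which `normalizedOp` is tridiagonal. -/
noncomputable def pochBasis (q : ℝ) (n : ℕ) (y : ℝ) : ℝ := qPoch q y n / y ^ n

/-- The coefficient of `y * pochBasis q (n + 1) y` in `normalizedOp` of `pochBasis q n`. -/
noncomputable def raisingCoeff (q A B Q : ℝ) (n : ℕ) : ℝ :=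
  A * B * q * (1 - Q * q ^ n) * (1 - Q * q ^ (n + 1)) / (Q ^ 2 * q ^ n)

/-- The coefficient of `y * pochBasis q n y` in `normalizedOp` of `pochBasis q n`. -/
noncomputable def diagCoeff (q A B C Q : ℝ) (n : ℕ) : ℝ :=
  (1 - Q * q ^ n) * (q / Q) * (A + B + A * B * (1 - (q + 1) * q ^ n) - A * B / (C * Q * q ^ n))

/-- The coefficient of `y * pochBasis q (n - 1) y` in `normalizedOp` of `pochBasis q n`. -/
noncomputable def loweringCoeff (q A B : ℝ) (n : ℕ) : ℝ :=
  -((1 - A * q ^ n) * (1 - B * q ^ n) * (1 - q ^ n))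

lemma normalizedOp_sum {ι : Type*} (q A B C Q : ℝ) (s : Finset ι) (c : ι → ℝ) (f : ι → ℝ → ℝ)
    (y : ℝ) :
    normalizedOp q A B C Q (fun y => ∑ i ∈ s, c i * f i y) y =
      ∑ i ∈ s, c i * normalizedOp q A B C Q (f i) y := by
  simp only [normalizedOp, Finset.mul_sum, ← Finset.sum_add_distrib, ← Finset.sum_sub_distrib]
  exact Finset.sum_congr rfl fun i _ => by ring

lemma pochBasis_zero (q y : ℝ) : pochBasis q 0 y = 1 := by
  rw [pochBasis, qPoch_zero, pow_zero, div_one]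

lemma pochBasis_succ (q y : ℝ) (n : ℕ) :
    pochBasis q (n + 1) y = (1 - y * q ^ n) / y * pochBasis q n y := by
  rw [pochBasis, pochBasis, qPoch_succ, pow_succ', mul_comm, mul_div_mul_comm]

lemma one_sub_mul_pochBasis_mul (q y : ℝ) (n : ℕ) :
    (1 - y) * pochBasis q n (q * y) = (1 - y * q ^ n) / q ^ n * pochBasis q n y := by
  rw [pochBasis, pochBasis, ← mul_div_assoc, ← qPoch_succ', qPoch_succ, mul_pow, mul_comm,
    mul_div_mul_comm]

lemma pochBasis_succ_div {q : ℝ} (hq : q ≠ 0) (y : ℝ) (n : ℕ) :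
    pochBasis q (n + 1) (y / q) = (q - y) / y * q ^ n * pochBasis q n y := by
  rw [pochBasis, pochBasis, qPoch_succ', mul_div_cancel₀ y hq, div_pow, pow_succ, pow_succ]
  field_simp

variable {q C Q y : ℝ} (A B : ℝ)

lemma normalizedOp_pochBasis_zero (hC : C ≠ 0) (hQ : Q ≠ 0) (hy : y ≠ 0) :
    normalizedOp q A B C Q (pochBasis q 0) y =
      y * (raisingCoeff q A B Q 0 * pochBasis q 1 y
        + diagCoeff q A B C Q 0 * pochBasis q 0 y) := by
  simp only [normalizedOp, raisingCoeff, diagCoeff, pochBasis_succ, pochBasis_zero]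
  field_simp
  ring

lemma normalizedOp_pochBasis_succ (hq : q ≠ 0) (hC : C ≠ 0) (hQ : Q ≠ 0) (hy : y ≠ 0) (n : ℕ) :
    normalizedOp q A B C Q (pochBasis q (n + 1)) y =
      y * (raisingCoeff q A B Q (n + 1) * pochBasis q (n + 2) y
        + diagCoeff q A B C Q (n + 1) * pochBasis q (n + 1) y
        + loweringCoeff q A B (n + 1) * pochBasis q n y) := by
  have hmul := one_sub_mul_pochBasis_mul q y (n + 1)
  have hfactor : normalizedOp q A B C Q (pochBasis q (n + 1)) y =
      (y - q * A) * (y - q * B) * pochBasis q (n + 1) (y / q)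
        - q * A * B / (C * Q ^ 2) * (y - C) * ((1 - y) * pochBasis q (n + 1) (q * y))
        - ((1 + q * A * B / (C * Q ^ 2)) * y ^ 2 - q / Q * (A + B + A * B + A * B / C) * y
          + A * B * q * (1 + q) / Q) * pochBasis q (n + 1) y := by
    rw [normalizedOp]; ring
  rw [hfactor, hmul, pochBasis_succ_div hq]
  simp only [raisingCoeff, diagCoeff, loweringCoeff, pochBasis_succ, pow_succ]
  field_simp
  ring

end NormalizedOp

section Solution

/-- The factor relating the coefficients of `seriesSolution` to `heineSum`. -/
noncomputable def seriesWeight (q B Q : ℝ) (n : ℕ) : ℝ :=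
  qPoch q Q n / qPoch q (q * B) n * (q * B / Q) ^ n

/-- The coefficients of `seriesSolution` in the basis `pochBasis`. -/
noncomputable def seriesCoeff (q A B C Q : ℝ) (n : ℕ) : ℝ :=
  heineSum q A (Q * C / B) (A / (Q * C)) n * seriesWeight q B Q n

/-- The solution of the normalized equation, as a sum which is complete when `Q * q ^ N = 1`. -/
noncomputable def seriesSolution (q A B C Q : ℝ) (N : ℕ) (y : ℝ) : ℝ :=
  ∑ n ∈ Finset.range (N + 1), seriesCoeff q A B C Q n * pochBasis q n y

lemma sum_range_mul_of_three_term {R : Type*} [CommRing R] {a b d c φ ψ : ℕ → R} {m : ℕ}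
    (hψ₀ : ψ 0 = a 0 * φ 1 + b 0 * φ 0)
    (hψ : ∀ n, ψ (n + 1) = a (n + 1) * φ (n + 2) + b (n + 1) * φ (n + 1) + d (n + 1) * φ n)
    (hc₀ : b 0 * c 0 + d 1 * c 1 = 0)
    (hc : ∀ n < m, a n * c n + b (n + 1) * c (n + 1) + d (n + 2) * c (n + 2) = 0) :
    ∑ n ∈ Finset.range (m + 1), c n * ψ n =
      a m * c m * φ (m + 1) - d (m + 1) * c (m + 1) * φ m := by
  induction m with
  | zero =>
    rw [Finset.sum_range_one, hψ₀]
    linear_combination φ 0 * hc₀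
  | succ m ih =>
    rw [Finset.sum_range_succ, ih fun n hn => hc n (hn.trans m.lt_succ_self), hψ]
    linear_combination φ (m + 1) * hc m m.lt_succ_self

variable {q A B C Q : ℝ} {n N : ℕ}

lemma seriesWeight_zero (q B Q : ℝ) : seriesWeight q B Q 0 = 1 := by
  simp only [seriesWeight, qPoch_zero, pow_zero, div_one, mul_one]

lemma seriesWeight_succ (Q : ℝ) (hB : qPoch q (q * B) (n + 1) ≠ 0) :
    (1 - B * q ^ (n + 1)) * seriesWeight q B Q (n + 1) =
      (1 - Q * q ^ n) * (q * B / Q) * seriesWeight q B Q n := by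
  rw [qPoch_succ, mul_ne_zero_iff] at hB
  rw [seriesWeight, seriesWeight, qPoch_succ, qPoch_succ, pow_succ (q * B / Q),
    show 1 - B * q ^ (n + 1) = 1 - q * B * q ^ n by ring]
  generalize q * B / Q = r
  field_simp [hB.1, hB.2]

lemma seriesCoeff_three_term (hq : q ≠ 0) (hB : B ≠ 0) (hC : C ≠ 0) (hQ : Q ≠ 0)
    (hqq : qPoch q q (n + 2) ≠ 0) (hqA : qPoch q (q * A) (n + 2) ≠ 0)
    (hqB : qPoch q (q * B) (n + 2) ≠ 0) :
    raisingCoeff q A B Q n * seriesCoeff q A B C Q n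
      + diagCoeff q A B C Q (n + 1) * seriesCoeff q A B C Q (n + 1)
      + loweringCoeff q A B (n + 2) * seriesCoeff q A B C Q (n + 2) = 0 := by
  have hqB' : qPoch q (q * B) (n + 1) ≠ 0 := qPoch_ne_zero_of_le hqB (by lia)
  have hheine := heineSum_three_term (Q * C / B) (A / (Q * C)) hq hqq hqA
  have hraise : raisingCoeff q A B Q n * seriesWeight q B Q n =
      (1 - Q * q ^ (n + 1)) * (q / Q) * (A / q ^ (n + 1)) *
        ((1 - B * q ^ (n + 1)) * seriesWeight q B Q (n + 1)) := by
    rw [seriesWeight_succ Q hqB', raisingCoeff, pow_succ]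
    field_simp
  have hlower : loweringCoeff q A B (n + 2) * seriesWeight q B Q (n + 2) =
      -((1 - A * q ^ (n + 2)) * (1 - q ^ (n + 2)) *
        ((1 - Q * q ^ (n + 1)) * (q * B / Q) * seriesWeight q B Q (n + 1))) := by
    rw [← seriesWeight_succ Q hqB, loweringCoeff]
    ring
  simp only [seriesCoeff]
  generalize heineSum q A (Q * C / B) (A / (Q * C)) n = c₀ at *
  generalize heineSum q A (Q * C / B) (A / (Q * C)) (n + 1) = c₁ at *
  generalize heineSum q A (Q * C / B) (A / (Q * C)) (n + 2) = c₂ at *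
  calc
    _ = c₀ * (raisingCoeff q A B Q n * seriesWeight q B Q n)
        + diagCoeff q A B C Q (n + 1) * (c₁ * seriesWeight q B Q (n + 1))
        + c₂ * (loweringCoeff q A B (n + 2) * seriesWeight q B Q (n + 2)) := by ring
    _ = -((1 - Q * q ^ (n + 1)) * (q * B / Q) * seriesWeight q B Q (n + 1)) * 0 := by
      rw [← hheine, hraise, hlower, diagCoeff]
      field_simp
      ring
    _ = 0 := mul_zero _

lemma seriesCoeff_three_term_zero (hq : q ≠ 0) (hB : B ≠ 0) (hC : C ≠ 0) (hQ : Q ≠ 0)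
    (hqq : qPoch q q 1 ≠ 0) (hqA : qPoch q (q * A) 1 ≠ 0) (hqB : qPoch q (q * B) 1 ≠ 0) :
    diagCoeff q A B C Q 0 * seriesCoeff q A B C Q 0
      + loweringCoeff q A B 1 * seriesCoeff q A B C Q 1 = 0 := by
  have hheine := heineSum_three_term_zero (Q * C / B) (A / (Q * C)) hq hqq hqA
  have hlower : loweringCoeff q A B 1 * seriesWeight q B Q 1 =
      -((1 - A * q) * (1 - q) * ((1 - Q) * (q * B / Q))) := by
    have hweight := seriesWeight_succ Q hqB
    simp only [zero_add, pow_zero, pow_one, mul_one, seriesWeight_zero] at hweight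
    rw [← hweight, loweringCoeff]
    ring
  simp only [seriesCoeff, seriesWeight_zero]
  generalize heineSum q A (Q * C / B) (A / (Q * C)) 0 = c₀ at *
  generalize heineSum q A (Q * C / B) (A / (Q * C)) 1 = c₁ at *
  calc
    _ = diagCoeff q A B C Q 0 * c₀ + c₁ * (loweringCoeff q A B 1 * seriesWeight q B Q 1) := by ring
    _ = -((1 - Q) * (q * B / Q)) * 0 := by
      rw [← hheine, hlower, diagCoeff]
      field_simp
      ring
    _ = 0 := mul_zero _

lemma sum_range_seriesCoeff_mul_normalizedOp {y : ℝ} (hq : q ≠ 0) (hB : B ≠ 0) (hC : C ≠ 0)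
    (hQ : Q ≠ 0) (hy : y ≠ 0) (hqq : qPoch q q (N + 1) ≠ 0) (hqA : qPoch q (q * A) (N + 1) ≠ 0)
    (hqB : qPoch q (q * B) (N + 1) ≠ 0) :
    ∑ n ∈ Finset.range (N + 1), seriesCoeff q A B C Q n * normalizedOp q A B C Q (pochBasis q n) y =
      y * (raisingCoeff q A B Q N * seriesCoeff q A B C Q N * pochBasis q (N + 1) y
        - loweringCoeff q A B (N + 1) * seriesCoeff q A B C Q (N + 1) * pochBasis q N y) := by
  have h := sum_range_mul_of_three_term (m := N)
    (a := fun n => y * raisingCoeff q A B Q n) (b := fun n => y * diagCoeff q A B C Q n)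
    (d := fun n => y * loweringCoeff q A B n) (c := seriesCoeff q A B C Q)
    (φ := fun n => pochBasis q n y) (ψ := fun n => normalizedOp q A B C Q (pochBasis q n) y)
    (by rw [normalizedOp_pochBasis_zero A B hC hQ hy]; ring)
    (fun n => by rw [normalizedOp_pochBasis_succ A B hq hC hQ hy]; ring)
    (by
      linear_combination y * seriesCoeff_three_term_zero hq hB hC hQ
        (qPoch_ne_zero_of_le hqq (by lia)) (qPoch_ne_zero_of_le hqA (by lia))
        (qPoch_ne_zero_of_le hqB (by lia)))
    (fun n hn => by
      linear_combination y * seriesCoeff_three_term (n := n) hq hB hC hQ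
        (qPoch_ne_zero_of_le hqq (by lia)) (qPoch_ne_zero_of_le hqA (by lia))
        (qPoch_ne_zero_of_le hqB (by lia)))
  rw [h]
  ring

theorem normalizedOp_seriesSolution {y : ℝ} (hq : q ≠ 0) (hB : B ≠ 0) (hC : C ≠ 0) (hy : y ≠ 0)
    (hQ : Q * q ^ N = 1) (hqq : qPoch q q N ≠ 0) (hqA : qPoch q (q * A) N ≠ 0)
    (hqB : qPoch q (q * B) N ≠ 0) :
    normalizedOp q A B C Q (seriesSolution q A B C Q N) y = 0 := by
  have hQ₀ : Q ≠ 0 := left_ne_zero_of_mul (hQ ▸ one_ne_zero)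
  have hdiag : diagCoeff q A B C Q N = 0 := by rw [diagCoeff, hQ, sub_self, zero_mul, zero_mul]
  have hraise : raisingCoeff q A B Q N = 0 := by
    rw [raisingCoeff, hQ, sub_self, mul_zero, zero_mul, zero_div]
  refine (normalizedOp_sum q A B C Q _ _ (pochBasis q) y).trans ?_
  cases N with
  | zero =>
    rw [Finset.sum_range_one, normalizedOp_pochBasis_zero A B hC hQ₀ hy, hdiag, hraise]
    ring
  | succ m =>
    have hraise' : raisingCoeff q A B Q m = 0 := by
      rw [raisingCoeff, hQ, sub_self, mul_zero, zero_div]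
    rw [Finset.sum_range_succ, sum_range_seriesCoeff_mul_normalizedOp hq hB hC hQ₀ hy hqq hqA hqB,
      normalizedOp_pochBasis_succ A B hq hC hQ₀ hy, hraise', hraise, hdiag]
    ring

end Solution

section Reduction

lemma qHyperVar2.swap {q h₁ h₂ l₁ l₂ α₁ α₂ t₁ t₂ : ℝ} {g : ℝ → ℝ}
    (hg : qHyperVar2 q h₁ h₂ l₁ l₂ α₁ α₂ t₁ t₂ g) :
    qHyperVar2 q h₂ h₁ l₂ l₁ α₁ α₂ t₂ t₁ g := fun x hx => by
  rw [add_comm h₂ h₁, add_assoc (h₁ + h₂), add_comm l₂ l₁, ← add_assoc]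
  linear_combination hg x hx

variable {q h H l L α₁ α₂ t T lam A B C Q τ : ℝ}

lemma rpow_mul_rpow_half_pow (hq : 0 < q) (n k : ℕ) :
    q ^ (-(n : ℝ) * k + (k : ℝ) ^ 2 / 2) * (q ^ (1 / 2 : ℝ)) ^ k =
      q ^ (k + 1).choose 2 / (q ^ n) ^ k := by
  rw [← pow_mul, ← Real.rpow_natCast q, ← Real.rpow_natCast q, ← Real.rpow_natCast (q ^ _),
    ← Real.rpow_mul hq.le, ← Real.rpow_add hq, ← Real.rpow_sub hq, Nat.cast_choose_two]
  congr 1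
  push_cast
  ring

lemma rpow_half_sq (hq : 0 < q) : (q ^ (1 / 2 : ℝ)) ^ 2 = q := by
  rw [← Real.sqrt_eq_rpow, Real.sq_sqrt hq.le]

lemma rpow_add_half_mul (hq : 0 < q) (ht : t ≠ 0) (a b T : ℝ) :
    q ^ (a + 1 / 2) * T = q ^ (b - 1 / 2) * t * (q * (q ^ (a - b) * T / t)) := by
  simp only [Real.rpow_add hq, Real.rpow_sub hq]
  field_simp
  rw [rpow_half_sq hq, mul_comm]

lemma rpow_eq_mul_normalized (hq : 0 < q) (ht : t ≠ 0) (hT : T ≠ 0)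
    (hlam : lam = (h + H - l - L - α₁ - α₂ + 1) / 2) (hA : A = q ^ (h - l))
    (hB : B = q ^ (H - l) * T / t) (hC : C = q ^ (L - l) * T / t) (hQ : Q = q ^ (lam + α₁)) :
    q ^ α₂ = q ^ α₁ * (q * A * B / (C * Q ^ 2)) := by
  have hα₂ : α₂ = h + H - l - L - α₁ + 1 - lam - lam := by rw [hlam]; ring
  subst hA hB hC hQ
  rw [hα₂]
  simp only [Real.rpow_add hq, Real.rpow_sub hq, Real.rpow_one]
  field_simp

lemma linear_coeff_eq_mul_normalized (hq : 0 < q) (ht : t ≠ 0) (hT : T ≠ 0)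
    (hlam : lam = (h + H - l - L - α₁ - α₂ + 1) / 2) (hA : A = q ^ (h - l))
    (hB : B = q ^ (H - l) * T / t) (hC : C = q ^ (L - l) * T / t) (hQ : Q = q ^ (lam + α₁))
    (hτ : τ = q ^ (l - 1 / 2) * t) :
    q ^ ((h + H + l + L + α₁ + α₂) / 2) *
        ((q ^ (-H) + q ^ (-L)) * t + (q ^ (-h) + q ^ (-l)) * T) =
      q ^ α₁ * τ * (q / Q * (A + B + A * B + A * B / C)) := by
  have hp : (h + H + l + L + α₁ + α₂) / 2 = h + H + 1 / 2 - lam := by rw [hlam]; ring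
  have hs := rpow_half_sq hq
  subst hA hB hC hQ hτ
  rw [hp]
  simp only [Real.rpow_add hq, Real.rpow_sub hq, Real.rpow_neg hq.le]
  field_simp
  rw [hs]
  ring

lemma const_coeff_eq_mul_normalized (hq : 0 < q) (ht : t ≠ 0)
    (hlam : lam = (h + H - l - L - α₁ - α₂ + 1) / 2) (hA : A = q ^ (h - l))
    (hB : B = q ^ (H - l) * T / t) (hQ : Q = q ^ (lam + α₁)) (hτ : τ = q ^ (l - 1 / 2) * t) :
    q ^ ((h + H + l + L + α₁ + α₂) / 2) * (q ^ (1 / 2 : ℝ) + q ^ (-1 / 2 : ℝ)) * t * T =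
      q ^ α₁ * τ ^ 2 * (A * B * q * (1 + q) / Q) := by
  have hp : (h + H + l + L + α₁ + α₂) / 2 = h + H + 1 / 2 - lam := by rw [hlam]; ring
  have hs := rpow_half_sq hq
  subst hA hB hQ hτ
  rw [hp, neg_div]
  simp only [Real.rpow_add hq, Real.rpow_sub hq, Real.rpow_neg hq.le]
  field_simp
  rw [hs]
  ring

lemma qHyperVar2_iff_normalizedOp_eq_zero (f : ℝ → ℝ) (hq : 0 < q) (ht : t ≠ 0) (hT : T ≠ 0)
    (hlam : lam = (h + H - l - L - α₁ - α₂ + 1) / 2) (hA : A = q ^ (h - l))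
    (hB : B = q ^ (H - l) * T / t) (hC : C = q ^ (L - l) * T / t) (hQ : Q = q ^ (lam + α₁))
    (hτ : τ = q ^ (l - 1 / 2) * t) :
    qHyperVar2 q h H l L α₁ α₂ t T (fun x => x ^ (-α₁) * f (x / τ)) ↔
      ∀ x > 0, normalizedOp q A B C Q f (x / τ) = 0 := by
  have hα₂ := rpow_eq_mul_normalized hq ht hT hlam hA hB hC hQ
  have hlin := linear_coeff_eq_mul_normalized hq ht hT hlam hA hB hC hQ hτ
  have hconst := const_coeff_eq_mul_normalized hq ht hlam hA hB hQ hτ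
  have hτ₀ : τ ≠ 0 := hτ ▸ mul_ne_zero (Real.rpow_pos_of_pos hq _).ne' ht
  have hh : q ^ (h + 1 / 2) * t = τ * (q * A) := by
    rw [rpow_add_half_mul hq ht h l t, mul_div_cancel_right₀ _ ht, ← hτ, ← hA]
  have hH : q ^ (H + 1 / 2) * T = τ * (q * B) := by
    rw [rpow_add_half_mul hq ht H l T, ← hτ, ← hB]
  have hL : q ^ (L - 1 / 2) * T = τ * C := by
    rw [hτ, hC]
    simp only [Real.rpow_sub hq]
    field_simp
  refine forall₂_congr fun x hx => ?_
  have hdiv : (x / q) ^ (-α₁) = q ^ α₁ * x ^ (-α₁) := by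
    rw [Real.div_rpow hx.le hq.le, Real.rpow_neg hq.le, div_inv_eq_mul, mul_comm]
  have hmul : q ^ α₁ * (q * x) ^ (-α₁) = x ^ (-α₁) := by
    rw [Real.mul_rpow hq.le hx.le, ← mul_assoc, ← Real.rpow_add hq, add_neg_cancel,
      Real.rpow_zero, one_mul]
  have hscale : q ^ α₁ * x ^ (-α₁) * τ ^ 2 ≠ 0 := by positivity
  rw [← mul_eq_zero_iff_left (b := normalizedOp q A B C Q f (x / τ)) hscale]
  refine Eq.congr ?_ rfl
  have hx' : x = τ * (x / τ) := (mul_div_cancel₀ x hτ₀).symm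
  beta_reduce
  rw [hh, hH, hL, ← hτ, neg_mul, hlin, hconst, hdiv, div_right_comm, Real.rpow_add hq α₁ α₂,
    mul_div_assoc q x τ, hα₂, normalizedOp]
  generalize x / τ = y at *
  generalize (q * x) ^ (-α₁) = Xq at *
  generalize x ^ (-α₁) = X at *
  subst hx'
  linear_combination q ^ α₁ * (q * A * B / (C * Q ^ 2)) * (τ * y - τ) * (τ * y - τ * C) *
    f (q * y) * hmul

lemma heineSum_eq_sum_rpow (hq : 0 < q) (A D w : ℝ) (n : ℕ) :
    heineSum q A D w n = ∑ k ∈ Finset.range (n + 1),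
      q ^ (-(n : ℝ) * (k : ℝ) + (k : ℝ) ^ 2 / 2) * qPoch q D k /
        (qPoch q (q * A) k * qPoch q q (n - k) * qPoch q q k) * (-(q ^ (1 / 2 : ℝ) * w)) ^ k := by
  refine Finset.sum_congr rfl fun k _ => ?_
  rw [heineTerm, div_pow, ← mul_neg, mul_pow]
  linear_combination -(qPoch q D k / (qPoch q (q * A) k * qPoch q q (n - k) * qPoch q q k) *
    (-w) ^ k) * rpow_mul_rpow_half_pow hq n k

lemma sum_eq_seriesSolution (hq : 0 < q) (ht : t ≠ 0) (hT : T ≠ 0) (hA : A = q ^ (h - l))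
    (hB : B = q ^ (H - l) * T / t) (hC : C = q ^ (L - l) * T / t) (hQ : Q = q ^ (lam + α₁))
    (hτ : τ = q ^ (l - 1 / 2) * t) (N : ℕ) (x : ℝ) :
    ∑ n ∈ Finset.range (N + 1),
        (∑ k ∈ Finset.range (n + 1),
            q ^ (-(n : ℝ) * (k : ℝ) + (k : ℝ) ^ 2 / 2) * qPoch q (q ^ (lam + α₁ - H + L)) k /
                (qPoch q (q ^ (h - l + 1)) k * qPoch q q (n - k) * qPoch q q k) *
              (-(q ^ (-lam - α₁ + h + 1 / 2) * t / (q ^ L * T))) ^ k) *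
          (qPoch q (q ^ (lam + α₁)) n / qPoch q (q ^ (1 + H - l) * T / t) n) *
          qPoch q (x / (q ^ (l - 1 / 2) * t)) n * (q ^ (-lam - α₁ + H + 1 / 2) * T / x) ^ n =
      seriesSolution q A B C Q N (x / τ) := by
  have hD : q ^ (lam + α₁ - H + L) = Q * C / B := by
    rw [hQ, hB, hC]
    simp only [Real.rpow_add hq, Real.rpow_sub hq]
    field_simp
  have hqA : q ^ (h - l + 1) = q * A := by rw [hA, Real.rpow_add_one hq.ne', mul_comm]
  have hw : q ^ (-lam - α₁ + h + 1 / 2) * t / (q ^ L * T) = q ^ (1 / 2 : ℝ) * (A / (Q * C)) := by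
    rw [hQ, hA, hC]
    simp only [Real.rpow_add hq, Real.rpow_sub hq, Real.rpow_neg hq.le]
    field_simp
  have hqB : q ^ (1 + H - l) * T / t = q * B := by
    rw [hB, add_sub_assoc, Real.rpow_add hq, Real.rpow_one]
    ring
  have hz : q ^ (-lam - α₁ + H + 1 / 2) * T = q * B / Q * τ := by
    rw [rpow_add_half_mul hq ht _ l T, ← hτ, hB, hQ,
      show -lam - α₁ + H - l = H - l - (lam + α₁) by ring, Real.rpow_sub hq]
    ring
  rw [hD, hqA, hw, hqB, hz, ← hQ, ← hτ, seriesSolution]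
  refine Finset.sum_congr rfl fun n _ => ?_
  rw [seriesCoeff, seriesWeight, pochBasis, heineSum_eq_sum_rpow hq,
    mul_div_assoc (q * B / Q) τ x, mul_pow, ← inv_div x τ, inv_pow]
  ring

end Reduction

theorem stmt1
    (q h₁ h₂ l₁ l₂ α₁ α₂ t₁ t₂ hᵢ hᵢ' lᵢ lᵢ' tᵢ tᵢ' lam : ℝ) (N : ℕ)
    (hq : 0 < q) (hq1 : q ≠ 1) (ht₁ : t₁ ≠ 0) (ht₂ : t₂ ≠ 0)
    (hidx : (hᵢ, hᵢ', lᵢ, lᵢ', tᵢ, tᵢ') = (h₁, h₂, l₁, l₂, t₁, t₂) ∨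
            (hᵢ, hᵢ', lᵢ, lᵢ', tᵢ, tᵢ') = (h₂, h₁, l₂, l₁, t₂, t₁))
    (hlam : lam = (h₁ + h₂ - l₁ - l₂ - α₁ - α₂ + 1) / 2)
    (hN : 0 < N) (hNlam : lam + α₁ = -(N : ℝ))
    (hden₁ : ∀ n : ℕ, 1 ≤ n → n ≤ N → q ^ (hᵢ' - lᵢ + (n : ℝ)) * tᵢ' / tᵢ ≠ 1)
    (hden₂ : ∀ k : ℕ, 1 ≤ k → k ≤ N → q ^ (hᵢ - lᵢ + (k : ℝ)) ≠ 1) :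
    qHyperVar2 q h₁ h₂ l₁ l₂ α₁ α₂ t₁ t₂ (fun x =>
      x ^ (-α₁) * ∑ n ∈ Finset.range (N + 1),
        (∑ k ∈ Finset.range (n + 1),
            q ^ (-(n : ℝ) * (k : ℝ) + (k : ℝ) ^ 2 / 2) *
                qPoch q (q ^ (lam + α₁ - hᵢ' + lᵢ')) k /
                (qPoch q (q ^ (hᵢ - lᵢ + 1)) k * qPoch q q (n - k) * qPoch q q k) *
              (-(q ^ (-lam - α₁ + hᵢ + 1/2) * tᵢ / (q ^ lᵢ' * tᵢ'))) ^ k) *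
          (qPoch q (q ^ (lam + α₁)) n / qPoch q (q ^ (1 + hᵢ' - lᵢ) * tᵢ' / tᵢ) n) *
          qPoch q (x / (q ^ (lᵢ - 1/2) * tᵢ)) n *
          (q ^ (-lam - α₁ + hᵢ' + 1/2) * tᵢ' / x) ^ n) := by
  obtain ⟨htᵢ, htᵢ', hlamᵢ, hswap⟩ : tᵢ ≠ 0 ∧ tᵢ' ≠ 0 ∧
      lam = (hᵢ + hᵢ' - lᵢ - lᵢ' - α₁ - α₂ + 1) / 2 ∧
      ∀ g, qHyperVar2 q hᵢ hᵢ' lᵢ lᵢ' α₁ α₂ tᵢ tᵢ' g → qHyperVar2 q h₁ h₂ l₁ l₂ α₁ α₂ t₁ t₂ g := by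
    simp only [Prod.mk.injEq] at hidx
    rcases hidx with ⟨rfl, rfl, rfl, rfl, rfl, rfl⟩ | ⟨rfl, rfl, rfl, rfl, rfl, rfl⟩
    · exact ⟨ht₁, ht₂, hlam, fun _ => id⟩
    · exact ⟨ht₂, ht₁, by linarith, fun _ => qHyperVar2.swap⟩
  have hQN : q ^ (lam + α₁) * q ^ N = 1 := by
    rw [hNlam, Real.rpow_neg hq.le, Real.rpow_natCast, inv_mul_cancel₀ (pow_ne_zero N hq.ne')]
  have hqA : qPoch q (q * q ^ (hᵢ - lᵢ)) N ≠ 0 := qPoch_mul_ne_zero fun k hk hkN => by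
    rw [← Real.rpow_add_natCast hq.ne']
    exact hden₂ k hk hkN
  have hqB : qPoch q (q * (q ^ (hᵢ' - lᵢ) * tᵢ' / tᵢ)) N ≠ 0 := qPoch_mul_ne_zero fun k hk hkN => by
    rw [mul_div_assoc, mul_right_comm, ← Real.rpow_add_natCast hq.ne', ← mul_div_assoc]
    exact hden₁ k hk hkN
  apply hswap
  simp only [sum_eq_seriesSolution hq htᵢ htᵢ' rfl rfl rfl rfl rfl]
  refine (qHyperVar2_iff_normalizedOp_eq_zero _ hq htᵢ htᵢ' hlamᵢ rfl rfl rfl rfl rfl).2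
    fun x hx => normalizedOp_seriesSolution hq.ne' ?_ ?_ ?_ hQN (qPoch_self_ne_zero hq hq1 N)
      hqA hqB
  all_goals positivity
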